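/- The multiple Dedekind zeta value ζ_{K;C}(1,2) = ∑_{γ,δ∈C} 1/(N(γ)·N(γ+δ)²) equals the Lebesgue integral of the product f₀(C; t₁, t₂)·f₀(C; u₁, u₂) over the region {(t₁,t₂,u₁,u₂,v₁,v₂) ∈ ℝ⁶ : t₁ > u₁ > v₁ > 0, t₂ > u₂ > v₂ > 0}. -/

import Mathlib

/-!
Expand the product `f₀(C;t)·f₀(C;u)` as a double sum over `(γ, δ)` of the positive functions
`exp(-γ₁t₁-γ₂t₂) exp(-δ₁u₁-δ₂u₂)`, and exchange sum and integral by Tonelli. For a single pair the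
integral is iterated in the order `t, u, v`: each step is an instance of
`∫_a^∞ exp(-cx) dx = exp(-ca)/c` (`lintegral_tailExp`), with `c = γⱼ`, then `c = γⱼ+δⱼ`
twice, which yields `∏ⱼ 1/(γⱼ(γⱼ+δⱼ)²)` (`lintegral_region`).

The computation is done in `[0,∞]`, where Tonelli needs no convergence hypothesis. Taking
`ENNReal.toReal` at the end is compatible with the real `tsum` and the Bochner integral whether or
not the two sides converge. The only convergence used is that of `f₀` at positive arguments, a
product of two geometric series (`summable_cone`).
-/

open MeasureTheory Real

/-- First/second real embedding of the cone element γ = a + b·β (a, b positive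
integers), with σⱼ(β) = β. -/
noncomputable def coneEmb (β : ℝ) (p : ℕ+ × ℕ+) : ℝ := (p.1 : ℝ) + (p.2 : ℝ) * β

/-- The generating function of the cone, f₀(C;t₁,t₂) = ∑_{γ∈C} exp(−γ₁t₁ − γ₂t₂). -/
noncomputable def coneGenFun (β₁ β₂ : ℝ) (t₁ t₂ : ℝ) : ℝ :=
  ∑' p : ℕ+ × ℕ+, exp (-(coneEmb β₁ p * t₁) - coneEmb β₂ p * t₂)

/-- The function `t ↦ exp(-ct)` cut off to `t > a`, with values in `[0,∞]`. -/
noncomputable def tailExp (c a t : ℝ) : ENNReal :=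
  if a < t then ENNReal.ofReal (exp (-(c * t))) else 0

@[fun_prop]
lemma measurable_tailExp {α : Type*} [MeasurableSpace α] (c : ℝ) {f g : α → ℝ}
    (hf : Measurable f) (hg : Measurable g) : Measurable fun x => tailExp c (f x) (g x) := by
  unfold tailExp
  exact Measurable.ite (measurableSet_lt hf hg) (by fun_prop) measurable_const

lemma lintegral_tailExp {c : ℝ} (hc : 0 < c) (a : ℝ) :
    ∫⁻ t, tailExp c a t = ENNReal.ofReal (exp (-(c * a))) * ENNReal.ofReal (1 / c) := by
  have h1 : (fun t => tailExp c a t)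
      = (Set.Ioi a).indicator fun t => ENNReal.ofReal (exp (-c * t)) := by
    funext t
    simp [tailExp, Set.indicator_apply]
  rw [h1, lintegral_indicator measurableSet_Ioi,
    ← ofReal_integral_eq_lintegral_ofReal (integrableOn_exp_mul_Ioi (by linarith) a)
      (Filter.Eventually.of_forall fun t => (exp_pos _).le),
    integral_exp_mul_Ioi (by linarith), ← ENNReal.ofReal_mul (exp_pos _).le]
  congr 1
  rw [neg_mul]
  field_simp

lemma ofReal_exp_mul_tailExp (c d a t : ℝ) :
    ENNReal.ofReal (exp (-(c * t))) * tailExp d a t = tailExp (c + d) a t := by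
  unfold tailExp
  split_ifs
  · rw [← ENNReal.ofReal_mul (exp_pos _).le, ← exp_add]
    ring_nf
  · simp

/-- Tonelli, integrating the first coordinate of the product first. -/
lemma lintegral_peel {β : Type*} [MeasureSpace β] [SFinite (volume : Measure β)]
    {f : ℝ × β → ENNReal} (hf : Measurable f) :
    ∫⁻ q, f q = ∫⁻ y : β, ∫⁻ x : ℝ, f (x, y) := by
  rw [Measure.volume_eq_prod]
  exact lintegral_prod_symm f hf.aemeasurable

lemma lintegral_region {c d c' d' : ℝ} (hc : 0 < c) (hd : 0 < d) (hc' : 0 < c') (hd' : 0 < d') :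
    ∫⁻ q : ℝ × ℝ × ℝ × ℝ × ℝ × ℝ,
      (tailExp c q.2.2.1 q.1 * (tailExp d q.2.2.2.2.1 q.2.2.1 * tailExp 0 0 q.2.2.2.2.1)) *
      (tailExp c' q.2.2.2.1 q.2.1 *
        (tailExp d' q.2.2.2.2.2 q.2.2.2.1 * tailExp 0 0 q.2.2.2.2.2)) =
      ENNReal.ofReal (1 / ((c * c') * ((c + d) * (c' + d')) ^ 2)) := by
  have hs : 0 < c + d := by positivity
  have hs' : 0 < c' + d' := by positivity
  -- One Tonelli step with respect to the innermost variable, after factoring out its complement.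
  have step : ∀ {c : ℝ}, 0 < c → ∀ a (X : ENNReal),
      ∫⁻ t, tailExp c a t * X
        = ENNReal.ofReal (exp (-(c * a))) * ENNReal.ofReal (1 / c) * X := by
    intro c hc a X
    rw [lintegral_mul_const _ (by fun_prop), lintegral_tailExp hc]
  rw [lintegral_peel (by fun_prop)]
  simp only [mul_assoc]
  simp_rw [step hc]
  rw [lintegral_peel (by fun_prop)]
  have e1 : ∀ (y : ℝ × ℝ × ℝ × ℝ) (x : ℝ),
      ENNReal.ofReal (exp (-(c * y.1))) * ENNReal.ofReal (1 / c) *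
        (tailExp d y.2.2.1 y.1 * (tailExp 0 0 y.2.2.1 * (tailExp c' y.2.1 x *
          (tailExp d' y.2.2.2 y.2.1 * tailExp 0 0 y.2.2.2)))) =
      tailExp c' y.2.1 x * (tailExp (c + d) y.2.2.1 y.1 * (ENNReal.ofReal (1 / c) *
        (tailExp 0 0 y.2.2.1 * (tailExp d' y.2.2.2 y.2.1 * tailExp 0 0 y.2.2.2)))) := by
    intro y x
    rw [← ofReal_exp_mul_tailExp c d]
    ring
  simp_rw [e1, step hc']
  rw [lintegral_peel (by fun_prop)]
  have e2 : ∀ (y : ℝ × ℝ × ℝ) (x : ℝ),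
      ENNReal.ofReal (exp (-(c' * y.1))) * ENNReal.ofReal (1 / c') *
        (tailExp (c + d) y.2.1 x * (ENNReal.ofReal (1 / c) *
        (tailExp 0 0 y.2.1 * (tailExp d' y.2.2 y.1 * tailExp 0 0 y.2.2)))) =
      tailExp (c + d) y.2.1 x * (tailExp (c' + d') y.2.2 y.1 * (ENNReal.ofReal (1 / c') *
        (ENNReal.ofReal (1 / c) * (tailExp 0 0 y.2.1 * tailExp 0 0 y.2.2)))) := by
    intro y x
    rw [← ofReal_exp_mul_tailExp c' d']
    ring
  simp_rw [e2, step hs]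
  rw [lintegral_peel (by fun_prop)]
  have e3 : ∀ (y : ℝ × ℝ) (x : ℝ),
      ENNReal.ofReal (exp (-((c + d) * y.1))) * ENNReal.ofReal (1 / (c + d)) *
        (tailExp (c' + d') y.2 x * (ENNReal.ofReal (1 / c') *
        (ENNReal.ofReal (1 / c) * (tailExp 0 0 y.1 * tailExp 0 0 y.2)))) =
      tailExp (c' + d') y.2 x * (tailExp (c + d) 0 y.1 * (ENNReal.ofReal (1 / (c + d)) *
        (ENNReal.ofReal (1 / c') * (ENNReal.ofReal (1 / c) * tailExp 0 0 y.2)))) := by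
    intro y x
    rw [← add_zero (c + d), ← ofReal_exp_mul_tailExp (c + d) 0 0 y.1, add_zero]
    ring
  simp_rw [e3, step hs']
  rw [lintegral_peel (by fun_prop)]
  have e4 : ∀ (y x : ℝ),
      ENNReal.ofReal (exp (-((c' + d') * y))) * ENNReal.ofReal (1 / (c' + d')) *
        (tailExp (c + d) 0 x * (ENNReal.ofReal (1 / (c + d)) *
        (ENNReal.ofReal (1 / c') * (ENNReal.ofReal (1 / c) * tailExp 0 0 y)))) =
      tailExp (c + d) 0 x * (tailExp (c' + d') 0 y * (ENNReal.ofReal (1 / (c' + d')) *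
        (ENNReal.ofReal (1 / (c + d)) *
        (ENNReal.ofReal (1 / c') * ENNReal.ofReal (1 / c))))) := by
    intro y x
    rw [← add_zero (c' + d'), ← ofReal_exp_mul_tailExp (c' + d') 0 0 y, add_zero]
    ring
  simp_rw [e4, step hs]
  rw [lintegral_const_mul _ (by fun_prop)]
  simp_rw [step hs']
  simp only [mul_zero, neg_zero, exp_zero, ENNReal.ofReal_one, one_mul]
  repeat rw [← ENNReal.ofReal_mul (by positivity)]
  congr 1
  field_simp

lemma coneEmb_pos {β : ℝ} (hβ : 0 < β) (p : ℕ+ × ℕ+) : 0 < coneEmb β p := by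
  have h1 : (0 : ℝ) < p.1 := by exact_mod_cast p.1.pos
  have h2 : (0 : ℝ) < p.2 := by exact_mod_cast p.2.pos
  unfold coneEmb
  positivity

lemma summable_cone {β₁ β₂ t₁ t₂ : ℝ} (hβ₁ : 0 < β₁) (hβ₂ : 0 < β₂) (ht₁ : 0 < t₁)
    (ht₂ : 0 < t₂) :
    Summable fun p : ℕ+ × ℕ+ => exp (-(coneEmb β₁ p * t₁) - coneEmb β₂ p * t₂) := by
  have geo : ∀ s : ℝ, 0 < s → Summable fun n : ℕ+ => exp (-s) ^ (n : ℕ) := fun s hs =>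
    (summable_geometric_of_lt_one (exp_pos _).le (Real.exp_lt_one_iff.mpr (by linarith))).comp_injective
      PNat.coe_injective
  have h := (geo (t₁ + t₂) (by positivity)).mul_of_nonneg
    (geo (β₁ * t₁ + β₂ * t₂) (by positivity)) (fun _ => by positivity) (fun _ => by positivity)
  refine h.congr fun p => ?_
  rw [← exp_nat_mul, ← exp_nat_mul, ← exp_add]
  unfold coneEmb
  congr 1
  ring

lemma coneGenFun_nonneg (β₁ β₂ t₁ t₂ : ℝ) : 0 ≤ coneGenFun β₁ β₂ t₁ t₂ :=
  tsum_nonneg fun _ => (exp_pos _).le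

/-- Holds for all arguments: if the series diverges, both sides are `0` by convention. -/
lemma coneGenFun_eq_toReal (β₁ β₂ t₁ t₂ : ℝ) :
    coneGenFun β₁ β₂ t₁ t₂ =
      (∑' p : ℕ+ × ℕ+,
        ENNReal.ofReal (exp (-(coneEmb β₁ p * t₁) - coneEmb β₂ p * t₂))).toReal := by
  rw [ENNReal.tsum_toReal_eq fun _ => ENNReal.ofReal_ne_top]
  simp only [ENNReal.toReal_ofReal (exp_pos _).le]
  rfl

lemma ofReal_coneGenFun {β₁ β₂ t₁ t₂ : ℝ} (hβ₁ : 0 < β₁) (hβ₂ : 0 < β₂) (ht₁ : 0 < t₁)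
    (ht₂ : 0 < t₂) :
    ENNReal.ofReal (coneGenFun β₁ β₂ t₁ t₂) =
      ∑' p : ℕ+ × ℕ+, ENNReal.ofReal (exp (-(coneEmb β₁ p * t₁) - coneEmb β₂ p * t₂)) :=
  ENNReal.ofReal_tsum_of_nonneg (fun _ => (exp_pos _).le) (summable_cone hβ₁ hβ₂ ht₁ ht₂)

/-- ζ_{K;C}(1,2) = ∑_{γ,δ∈C} 1/(N(γ)·N(γ+δ)²) equals the Lebesgue integral of
f₀(C;t₁,t₂)·f₀(C;u₁,u₂) over the region
{(t₁,t₂,u₁,u₂,v₁,v₂) : t₁ > u₁ > v₁ > 0, t₂ > u₂ > v₂ > 0}.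
The pair (γ,δ) ∈ C × C is parametrized by pairs of pairs of positive integers,
with γ = a + bβ and γ + δ = (a+c) + (b+d)β. -/
theorem multipleDedekindZeta_cone_one_two_eq_integral (β₁ β₂ : ℝ)
    (hβ₁ : 1 < β₁) (hβ₂ : 0 < β₂) (hβ₂' : β₂ < 1) :
    (∑' P : (ℕ+ × ℕ+) × (ℕ+ × ℕ+),
        1 / ((coneEmb β₁ P.1 * coneEmb β₂ P.1) *
          ((coneEmb β₁ P.1 + coneEmb β₁ P.2) * (coneEmb β₂ P.1 + coneEmb β₂ P.2)) ^ 2)) =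
      ∫ q in {q : ℝ × ℝ × ℝ × ℝ × ℝ × ℝ |
          q.2.2.1 < q.1 ∧ q.2.2.2.2.1 < q.2.2.1 ∧ 0 < q.2.2.2.2.1 ∧
          q.2.2.2.1 < q.2.1 ∧ q.2.2.2.2.2 < q.2.2.2.1 ∧ 0 < q.2.2.2.2.2},
        coneGenFun β₁ β₂ q.1 q.2.1 * coneGenFun β₁ β₂ q.2.2.1 q.2.2.2.1 := by
  have hβ₁0 : 0 < β₁ := by linarith
  have hS : MeasurableSet {q : ℝ × ℝ × ℝ × ℝ × ℝ × ℝ |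
          q.2.2.1 < q.1 ∧ q.2.2.2.2.1 < q.2.2.1 ∧ 0 < q.2.2.2.2.1 ∧
          q.2.2.2.1 < q.2.1 ∧ q.2.2.2.2.2 < q.2.2.2.1 ∧ 0 < q.2.2.2.2.2} := by
    simp only [Set.ofPred_and]
    repeat' apply MeasurableSet.inter
    all_goals exact measurableSet_lt (by fun_prop) (by fun_prop)
  have hmeas : Measurable fun q : ℝ × ℝ × ℝ × ℝ × ℝ × ℝ =>
      coneGenFun β₁ β₂ q.1 q.2.1 * coneGenFun β₁ β₂ q.2.2.1 q.2.2.2.1 := by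
    simp_rw [coneGenFun_eq_toReal]
    refine .mul (.ennreal_toReal (.tsum fun p => ?_))
      (.ennreal_toReal (.tsum fun p => ?_)) <;> fun_prop
  rw [integral_eq_lintegral_of_nonneg_ae
    (Filter.Eventually.of_forall fun q =>
      mul_nonneg (coneGenFun_nonneg _ _ _ _) (coneGenFun_nonneg _ _ _ _)) hmeas.aestronglyMeasurable,
    ← lintegral_indicator hS]
  have key : ∀ q : ℝ × ℝ × ℝ × ℝ × ℝ × ℝ,
      Set.indicator {q : ℝ × ℝ × ℝ × ℝ × ℝ × ℝ |
          q.2.2.1 < q.1 ∧ q.2.2.2.2.1 < q.2.2.1 ∧ 0 < q.2.2.2.2.1 ∧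
          q.2.2.2.1 < q.2.1 ∧ q.2.2.2.2.2 < q.2.2.2.1 ∧ 0 < q.2.2.2.2.2}
        (fun q => ENNReal.ofReal
          (coneGenFun β₁ β₂ q.1 q.2.1 * coneGenFun β₁ β₂ q.2.2.1 q.2.2.2.1)) q =
      ∑' P : (ℕ+ × ℕ+) × (ℕ+ × ℕ+),
        (tailExp (coneEmb β₁ P.1) q.2.2.1 q.1 *
          (tailExp (coneEmb β₁ P.2) q.2.2.2.2.1 q.2.2.1 * tailExp 0 0 q.2.2.2.2.1)) *
        (tailExp (coneEmb β₂ P.1) q.2.2.2.1 q.2.1 *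
          (tailExp (coneEmb β₂ P.2) q.2.2.2.2.2 q.2.2.2.1 * tailExp 0 0 q.2.2.2.2.2)) := by
    rintro ⟨t₁, t₂, u₁, u₂, v₁, v₂⟩
    simp only [Set.indicator_apply, Set.mem_ofPred_eq]
    split_ifs with h
    · obtain ⟨h1, h2, h3, h4, h5, h6⟩ := h
      rw [ENNReal.ofReal_mul (coneGenFun_nonneg _ _ _ _),
        ofReal_coneGenFun hβ₁0 hβ₂ (by linarith) (by linarith),
        ofReal_coneGenFun hβ₁0 hβ₂ (by linarith) (by linarith),
        ← ENNReal.tsum_mul_right]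
      refine Eq.trans (tsum_congr fun p => ?_) ENNReal.tsum_prod'.symm
      rw [← ENNReal.tsum_mul_left]
      refine tsum_congr fun r => ?_
      simp only [tailExp, h1, h2, h3, h4, h5, h6, if_true, sub_eq_add_neg, exp_add,
        ENNReal.ofReal_mul (exp_pos _).le, zero_mul, neg_zero, exp_zero, ENNReal.ofReal_one]
      ring
    · symm
      rw [ENNReal.tsum_eq_zero]
      intro P
      by_contra hne
      apply h
      simp only [tailExp, mul_eq_zero, not_or, ite_eq_right_iff, Classical.not_imp] at hne
      obtain ⟨⟨⟨h1, -⟩, ⟨h2, -⟩, h3, -⟩, ⟨h4, -⟩, ⟨h5, -⟩, h6, -⟩ := hne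
      exact ⟨h1, h2, h3, h4, h5, h6⟩
  simp_rw [key]
  rw [lintegral_tsum fun P => Measurable.aemeasurable (by fun_prop)]
  simp_rw [lintegral_region (coneEmb_pos hβ₁0 _) (coneEmb_pos hβ₁0 _) (coneEmb_pos hβ₂ _)
    (coneEmb_pos hβ₂ _)]
  rw [ENNReal.tsum_toReal_eq fun _ => ENNReal.ofReal_ne_top]
  refine tsum_congr fun P => ?_
  have a1 := coneEmb_pos hβ₁0 P.1
  have a2 := coneEmb_pos hβ₂ P.1
  rw [ENNReal.toReal_ofReal (by positivity)]
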